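/- For positive integers s, t, n, every red/blue coloring of the edges of the complete graph on {1, ..., N} with N ≥ (2s)^{t(t+1) log n} contains either a red clique on s vertices or a blue ordered copy of P_n^t; that is, r_2(K_s, P_n^t) < (2s)^{t(t+1) log n}. -/

import Mathlib

/-- No red clique on `s` vertices inside `A`. -/
def NoRed (χ : ℕ → ℕ → Bool) (s : ℕ) (A : Finset ℕ) : Prop :=
  ∀ S : Finset ℕ, S ⊆ A → S.card = s → ¬ ∀ u ∈ S, ∀ v ∈ S, u < v → χ u v = true

/-- `P` spans a blue copy of the `t`-th power of a path. -/
def IsPow (χ : ℕ → ℕ → Bool) (t : ℕ) (P : Finset ℕ) : Prop :=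
  ∀ u ∈ P, ∀ v ∈ P, u < v → (P.filter (fun w => u < w ∧ w < v)).card < t → χ u v = false

theorem NoRed.mono {χ : ℕ → ℕ → Bool} {s : ℕ} {A B : Finset ℕ} (h : NoRed χ s A) (hB : B ⊆ A) :
    NoRed χ s B := fun S hS hc => h S (hS.trans hB) hc

theorem greedy_red (χ : ℕ → ℕ → Bool) (d : ℕ) (hd : 0 < d) (s : ℕ) : ∀ Z : Finset ℕ,
    (∀ x ∈ Z, (Z.filter (fun y => x < y ∧ χ x y = false)).card < d) → s * d ≤ Z.card →
    ∃ S : Finset ℕ, S ⊆ Z ∧ S.card = s ∧ ∀ u ∈ S, ∀ v ∈ S, u < v → χ u v = true := by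
  induction s with
  | zero => intro Z _ _; exact ⟨∅, by simp, by simp, by simp⟩
  | succ s ih =>
    intro Z hZ hc
    have hne : Z.Nonempty := by
      rw [← Finset.card_pos]; nlinarith
    set x := Z.min' hne with hx
    have hxZ : x ∈ Z := Finset.min'_mem _ _
    have hmin : ∀ y ∈ Z, x ≤ y := fun y hy => Finset.min'_le _ _ hy
    set Z' := Z.filter (fun y => x < y ∧ χ x y = true) with hZ'
    have hsub : Z' ⊆ Z := Finset.filter_subset _ _
    have hun : Z ⊆ insert x (Z' ∪ Z.filter (fun y => x < y ∧ χ x y = false)) := by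
      intro y hy
      have := hmin y hy
      simp only [hZ', Finset.mem_insert, Finset.mem_union, Finset.mem_filter, hy, true_and]
      rcases this.eq_or_lt with h | h
      · left; exact h.symm
      · right; cases hh : χ x y <;> simp [h]
    have h1 := Finset.card_le_card hun
    have h2 := Finset.card_insert_le x (Z' ∪ Z.filter (fun y => x < y ∧ χ x y = false))
    have h3 := Finset.card_union_le Z' (Z.filter (fun y => x < y ∧ χ x y = false))
    have h4 := hZ x hxZ
    have h5 : s * d ≤ Z'.card := by
      have : (s + 1) * d = s * d + d := by ring
      omega
    obtain ⟨S, hS, hSc, hSr⟩ := ih Z' (fun y hy => lt_of_le_of_lt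
      (Finset.card_le_card (Finset.filter_subset_filter _ hsub)) (hZ y (hsub hy))) h5
    have hSx : ∀ y ∈ S, x < y ∧ χ x y = true := fun y hy => (Finset.mem_filter.1 (hS hy)).2
    refine ⟨insert x S, ?_, ?_, ?_⟩
    · exact Finset.insert_subset hxZ (hS.trans hsub)
    · rw [Finset.card_insert_of_notMem, hSc]
      intro h; exact absurd (hSx x h).1 (lt_irrefl _)
    · intro u hu v hv huv
      rcases Finset.mem_insert.1 hu with rfl | hu
      · rcases Finset.mem_insert.1 hv with rfl | hv
        · exact absurd huv (lt_irrefl _)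
        · exact (hSx v hv).2
      · rcases Finset.mem_insert.1 hv with rfl | hv
        · exact absurd huv (not_lt.2 (hSx u hu).1.le)
        · exact hSr u hu v hv huv

/-- Blue `j`-cliques in `A` with at least `d` common blue right neighbours in `A`. -/
def fam (χ : ℕ → ℕ → Bool) (d j : ℕ) (A : Finset ℕ) : Finset (Finset ℕ) :=
  (A.powersetCard j).filter (fun S => (∀ u ∈ S, ∀ v ∈ S, u < v → χ u v = false) ∧
    d ≤ (A.filter (fun y => ∀ u ∈ S, u < y ∧ χ u y = false)).card)

/-- Lower bound for the size of `fam`. -/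
def cnt (s d : ℕ) : ℕ → ℕ
  | 0 => 1
  | j + 1 => s * ((2 * s) ^ j * d) * cnt s d j

theorem cnt_sq (s d j : ℕ) :
    cnt s d (j + 1) ^ 2 = s ^ (2 * (j + 1)) * d ^ (2 * (j + 1)) * (2 * s) ^ (j * (j + 1)) := by
  induction j with
  | zero => simp [cnt]; ring
  | succ j ih =>
    rw [cnt, mul_pow, ih]
    ring

theorem fam_card (χ : ℕ → ℕ → Bool) (s d : ℕ) (hs : 0 < s) (hd : 0 < d) (j : ℕ) :
    ∀ A : Finset ℕ, NoRed χ s A → (2 * s) ^ j * d ≤ A.card → cnt s d j ≤ (fam χ d j A).card := by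
  induction j with
  | zero =>
    intro A _ hA
    simp only [cnt]
    apply Finset.card_pos.2
    refine ⟨∅, ?_⟩
    simp [fam]
    simpa using hA
  | succ j ih =>
    intro A hR hA
    set D := (2 * s) ^ j * d with hD
    have hDpos : 0 < D := by positivity
    have hA2 : 2 * (s * D) ≤ A.card := by
      refine le_trans (le_of_eq ?_) hA
      rw [hD]; ring
    let R : ℕ → Finset ℕ := fun x => A.filter (fun y => x < y ∧ χ x y = false)
    set G := A.filter (fun x => D ≤ (R x).card) with hG
    set Z := A.filter (fun x => ¬ D ≤ (R x).card) with hZ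
    have hGZ : G.card + Z.card = A.card := Finset.card_filter_add_card_filter_not _
    have hZc : Z.card < s * D := by
      by_contra hcon
      push Not at hcon
      obtain ⟨S, hS, hSc, hSr⟩ := greedy_red χ D hDpos s Z (by
        intro x hx
        have := (Finset.mem_filter.1 hx).2
        push Not at this
        exact lt_of_le_of_lt (Finset.card_le_card
          (Finset.filter_subset_filter _ (Finset.filter_subset _ _))) this) hcon
      exact hR S (hS.trans (Finset.filter_subset _ _)) hSc hSr
    have hGc : s * D ≤ G.card := by omega
    have hsum : s * D * cnt s d j ≤ (G.sigma (fun x => fam χ d j (R x))).card := by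
      rw [Finset.card_sigma]
      calc s * D * cnt s d j ≤ G.card * cnt s d j := Nat.mul_le_mul_right _ hGc
        _ = ∑ x ∈ G, cnt s d j := by simp
        _ ≤ _ := Finset.sum_le_sum (fun x hx => ih (R x) (hR.mono (Finset.filter_subset _ _))
            (Finset.mem_filter.1 hx).2)
    have key : ∀ x S, S ∈ fam χ d j (R x) → ∀ y ∈ S, x < y ∧ χ x y = false := by
      intro x S hS y hy
      have h1 := (Finset.mem_powersetCard.1 (Finset.mem_filter.1 hS).1).1 hy
      exact (Finset.mem_filter.1 h1).2
    rw [cnt]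
    refine hsum.trans (Finset.card_le_card_of_injOn (fun p => insert p.1 p.2) ?_ ?_)
    · rintro ⟨x, S⟩ hp
      simp only [Finset.mem_coe, Finset.mem_sigma] at hp
      obtain ⟨hx, hS⟩ := hp
      have hk := key x S hS
      simp only [fam, Finset.mem_filter, Finset.mem_powersetCard] at hS
      obtain ⟨⟨hSR, hSc⟩, hb, hcn⟩ := hS
      have hxA : x ∈ A := (Finset.mem_filter.1 hx).1
      simp only [fam, Finset.mem_coe, Finset.mem_filter, Finset.mem_powersetCard]
      refine ⟨⟨?_, ?_⟩, ?_, ?_⟩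
      · exact Finset.insert_subset hxA (hSR.trans (Finset.filter_subset _ _))
      · rw [Finset.card_insert_of_notMem, hSc]
        intro h; exact absurd (hk x h).1 (lt_irrefl _)
      · intro u hu v hv huv
        rcases Finset.mem_insert.1 hu with rfl | hu
        · rcases Finset.mem_insert.1 hv with rfl | hv
          · exact absurd huv (lt_irrefl _)
          · exact (hk v hv).2
        · rcases Finset.mem_insert.1 hv with hv | hv
          · have := (hk u ‹u ∈ S›).1
            omega
          · exact hb u ‹u ∈ S› v hv huv
      · refine hcn.trans (Finset.card_le_card ?_)
        intro y hy
        simp only [R, Finset.mem_filter] at hy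
        simp only [Finset.mem_filter]
        refine ⟨hy.1.1, ?_⟩
        intro u hu
        rcases Finset.mem_insert.1 hu with rfl | hu
        · exact hy.1.2
        · exact hy.2 u hu
    · rintro ⟨x, S⟩ hp ⟨x', S'⟩ hp' heq
      simp only [Finset.mem_coe, Finset.mem_sigma] at hp hp'
      have hk := key x S hp.2
      have hk' := key x' S' hp'.2
      simp only at heq
      have hxx : x = x' := by
        have h1 : x ∈ insert x' S' := heq ▸ Finset.mem_insert_self x S
        have h2 : x' ∈ insert x S := heq ▸ Finset.mem_insert_self x' S'
        rcases Finset.mem_insert.1 h1 with h | h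
        · exact h
        · rcases Finset.mem_insert.1 h2 with h' | h'
          · exact h'.symm
          · exact absurd (hk' x h).1 (not_lt.2 (hk x' h').1.le)
      subst hxx
      have n1 : x ∉ S := fun h => absurd (hk x h).1 (lt_irrefl _)
      have n2 : x ∉ S' := fun h => absurd (hk' x h).1 (lt_irrefl _)
      have : S = S' := by
        rw [← Finset.erase_insert n1, ← Finset.erase_insert n2, heq]
      subst this
      rfl

theorem arith (s r M : ℕ) (hs : 2 ≤ s) :
    ((2 * s) ^ ((r + 1) * (r + 2)) * M) ^ (r + 1) * M ≤
      cnt s ((2 * s) ^ ((r + 2) * r) * M) (r + 2) := by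
  refine (Nat.pow_le_pow_iff_left (n := 2) (by norm_num)).1 ?_
  rw [cnt_sq]
  have h1 : (2 * s) ^ (r + 1) ≤ s ^ 2 * (2 * s) ^ (2 * r) := by
    have a : 2 * s ≤ s ^ 2 := by nlinarith
    have b : (2 * s) ^ r ≤ (2 * s) ^ (2 * r) := Nat.pow_le_pow_right (by omega) (by omega)
    calc (2 * s) ^ (r + 1) = (2 * s) * (2 * s) ^ r := by ring
      _ ≤ _ := Nat.mul_le_mul a b
  have h2 := Nat.pow_le_pow_left h1 (r + 2)
  set q := 2 * s with hq
  clear_value q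
  calc ((q ^ ((r + 1) * (r + 2)) * M) ^ (r + 1) * M) ^ 2
      = (q ^ (r + 1)) ^ (r + 2) * (q ^ ((r + 1) * (r + 2) * (2 * r + 1)) * M ^ (2 * (r + 2))) := by
        ring
    _ ≤ (s ^ 2 * q ^ (2 * r)) ^ (r + 2) *
        (q ^ ((r + 1) * (r + 2) * (2 * r + 1)) * M ^ (2 * (r + 2))) := Nat.mul_le_mul_right _ h2
    _ = _ := by ring

theorem middle_clique (χ : ℕ → ℕ → Bool) (s r M : ℕ) (hs : 2 ≤ s) (hM : 0 < M) (A : Finset ℕ)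
    (hR : NoRed χ s A) (hA : A.card = (2 * s) ^ ((r + 1) * (r + 2)) * M) :
    ∃ C : Finset ℕ, C ⊆ A ∧ C.card = r + 1 ∧ (∀ u ∈ C, ∀ v ∈ C, u < v → χ u v = false) ∧
      M ≤ (A.filter (fun y => ∀ u ∈ C, u < y ∧ χ u y = false)).card ∧
      M ≤ (A.filter (fun x => ∀ u ∈ C, x < u ∧ χ x u = false)).card := by
  set d := (2 * s) ^ ((r + 2) * r) * M with hd
  have hdM : M ≤ d := Nat.le_mul_of_pos_left _ (by positivity)
  have hF : cnt s d (r + 2) ≤ (fam χ d (r + 2) A).card := by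
    apply fam_card χ s d (by omega) (by omega) (r + 2) A hR
    rw [hA, hd]
    apply le_of_eq
    ring
  have har := arith s r M hs
  rw [← hA, ← hd] at har
  have hch : (A.powersetCard (r + 1)).card * M ≤ (fam χ d (r + 2) A).card := by
    rw [Finset.card_powersetCard]
    exact (Nat.mul_le_mul_right _ (Nat.choose_le_pow _ _)).trans (har.trans hF)
  have hApos : 0 < A.card := by rw [hA]; positivity
  have hFne : (fam χ d (r + 2) A).Nonempty := by
    rw [← Finset.card_pos]
    have : 0 < A.card ^ (r + 1) * M := by positivity
    omega
  let f : Finset ℕ → Finset ℕ := fun S => if h : S.Nonempty then S.erase (S.min' h) else ∅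
  have hne : ∀ S ∈ fam χ d (r + 2) A, S.Nonempty := by
    intro S hS
    have := (Finset.mem_powersetCard.1 (Finset.mem_filter.1 hS).1).2
    rw [← Finset.card_pos]; omega
  have hf : ∀ S ∈ fam χ d (r + 2) A, f S ∈ A.powersetCard (r + 1) := by
    intro S hS
    have h1 := Finset.mem_powersetCard.1 (Finset.mem_filter.1 hS).1
    simp only [f, hne S hS, dif_pos]
    rw [Finset.mem_powersetCard]
    refine ⟨(Finset.erase_subset _ _).trans h1.1, ?_⟩
    rw [Finset.card_erase_of_mem (Finset.min'_mem _ _), h1.2]; rfl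
  obtain ⟨S0, hS0⟩ := hFne
  obtain ⟨C, hC, hfib⟩ := Finset.exists_le_card_fiber_of_mul_le_card_of_maps_to hf
    ⟨_, hf S0 hS0⟩ hch
  have hCc := Finset.mem_powersetCard.1 hC
  have str : ∀ S ∈ (fam χ d (r + 2) A).filter (fun S => f S = C),
      ∃ h : S.Nonempty, S = insert (S.min' h) C ∧ (∀ u ∈ C, S.min' h < u) := by
    intro S hS
    obtain ⟨hS, hfS⟩ := Finset.mem_filter.1 hS
    refine ⟨hne S hS, ?_, ?_⟩
    · rw [← hfS]
      simp only [f, hne S hS, dif_pos]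
      exact (Finset.insert_erase (Finset.min'_mem _ _)).symm
    · intro u hu
      rw [← hfS] at hu
      simp only [f, hne S hS, dif_pos] at hu
      exact Finset.min'_lt_of_mem_erase_min' _ _ hu
  have hnonempty : ((fam χ d (r + 2) A).filter (fun S => f S = C)).Nonempty := by
    rw [← Finset.card_pos]; omega
  obtain ⟨S, hS⟩ := hnonempty
  obtain ⟨hSn, hSi, hSl⟩ := str S hS
  have hSm := (Finset.mem_filter.1 (Finset.mem_filter.1 hS).1).2
  have hCS : C ⊆ S := by rw [hSi]; exact Finset.subset_insert _ _
  refine ⟨C, hCc.1, hCc.2, ?_, ?_, ?_⟩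
  · exact fun u hu v hv => hSm.1 u (hCS hu) v (hCS hv)
  · refine hdM.trans (hSm.2.trans (Finset.card_le_card ?_))
    intro y hy
    simp only [Finset.mem_filter] at hy ⊢
    exact ⟨hy.1, fun u hu => hy.2 u (hCS hu)⟩
  · refine hfib.trans ?_
    apply Finset.card_le_card_of_injOn (fun S => if h : S.Nonempty then S.min' h else 0)
    · intro T hT
      obtain ⟨hTn, hTi, hTl⟩ := str T hT
      have hTm := Finset.mem_filter.1 (Finset.mem_filter.1 hT).1
      have hTA := (Finset.mem_powersetCard.1 hTm.1).1
      have hmm := Finset.min'_mem T hTn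
      have hCT : C ⊆ T := by rw [hTi]; exact Finset.subset_insert _ _
      simp only [hTn, dif_pos, Finset.mem_coe, Finset.mem_filter]
      exact ⟨hTA hmm, fun u hu => ⟨hTl u hu, hTm.2.1 _ hmm u (hCT hu) (hTl u hu)⟩⟩
    · intro T hT T' hT' heq
      obtain ⟨hTn, hTi, hTl⟩ := str T hT
      obtain ⟨hTn', hTi', hTl'⟩ := str T' hT'
      simp only [hTn, hTn', dif_pos] at heq
      rw [hTi, hTi', heq]

theorem main_ind (χ : ℕ → ℕ → Bool) (s r : ℕ) (hs : 2 ≤ s) (k : ℕ) : ∀ A : Finset ℕ,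
    NoRed χ s A → (2 * s) ^ ((r + 1) * (r + 2) * k) ≤ A.card →
    ∃ P : Finset ℕ, P ⊆ A ∧ IsPow χ (r + 1) P ∧ 2 ^ (k + 1) ≤ P.card + 1 := by
  induction k with
  | zero =>
    intro A _ hA
    obtain ⟨a, ha⟩ : A.Nonempty := by rw [← Finset.card_pos]; simpa using hA
    refine ⟨{a}, by simpa using ha, ?_, by simp⟩
    intro u hu v hv huv
    simp only [Finset.mem_singleton] at hu hv
    omega
  | succ k ih =>
    intro A' hR' hA'
    set M := (2 * s) ^ ((r + 1) * (r + 2) * k) with hM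
    have hMpos : 0 < M := by positivity
    have hA1 : (2 * s) ^ ((r + 1) * (r + 2)) * M ≤ A'.card := by
      refine le_trans (le_of_eq ?_) hA'
      rw [hM]; ring
    obtain ⟨A, hAA, hA⟩ := Finset.exists_subset_card_eq hA1
    obtain ⟨C, hCA, hCc, hCb, hCR, hCL⟩ := middle_clique χ s r M hs hMpos A (hR'.mono hAA) hA
    obtain ⟨Q, hQ, hQp, hQc⟩ := ih _ (hR'.mono ((Finset.filter_subset _ _).trans hAA)) hCR
    obtain ⟨P, hP, hPp, hPc⟩ := ih _ (hR'.mono ((Finset.filter_subset _ _).trans hAA)) hCL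
    have hQ' : ∀ y ∈ Q, ∀ u ∈ C, u < y ∧ χ u y = false :=
      fun y hy => (Finset.mem_filter.1 (hQ hy)).2
    have hP' : ∀ y ∈ P, ∀ u ∈ C, y < u ∧ χ y u = false :=
      fun y hy => (Finset.mem_filter.1 (hP hy)).2
    obtain ⟨c, hc⟩ : C.Nonempty := by rw [← Finset.card_pos]; omega
    have dPC : Disjoint P C := by
      rw [Finset.disjoint_left]; intro a h1 h2; exact absurd (hP' a h1 a h2).1 (lt_irrefl _)
    have dPCQ : Disjoint (P ∪ C) Q := by
      rw [Finset.disjoint_left]; intro a h1 h2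
      rcases Finset.mem_union.1 h1 with h1 | h1
      · have := (hP' a h1 c hc).1
        have := (hQ' a h2 c hc).1
        omega
      · exact absurd (hQ' a h2 a h1).1 (lt_irrefl _)
    refine ⟨P ∪ C ∪ Q, ?_, ?_, ?_⟩
    · exact Finset.union_subset (Finset.union_subset ((hP.trans (Finset.filter_subset _ _)).trans hAA)
        (hCA.trans hAA)) ((hQ.trans (Finset.filter_subset _ _)).trans hAA)
    · intro u hu v hv huv hlt
      have sP : P ⊆ P ∪ C ∪ Q := by intro a; simp; tauto
      have sC : C ⊆ P ∪ C ∪ Q := by intro a; simp; tauto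
      have sQ : Q ⊆ P ∪ C ∪ Q := by intro a; simp; tauto
      simp only [Finset.mem_union] at hu hv
      rcases hu with (hu | hu) | hu <;> rcases hv with (hv | hv) | hv
      · exact hPp u hu v hv huv (lt_of_le_of_lt
          (Finset.card_le_card (Finset.filter_subset_filter _ sP)) hlt)
      · exact (hP' u hu v hv).2
      · exfalso
        have : C ⊆ (P ∪ C ∪ Q).filter (fun w => u < w ∧ w < v) := by
          intro w hw
          exact Finset.mem_filter.2 ⟨sC hw, (hP' u hu w hw).1, (hQ' v hv w hw).1⟩
        have := Finset.card_le_card this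
        omega
      · exact absurd huv (not_lt.2 (hP' v hv u hu).1.le)
      · exact hCb u hu v hv huv
      · exact (hQ' v hv u hu).2
      · exfalso
        have := (hP' v hv c hc).1
        have := (hQ' u hu c hc).1
        omega
      · exact absurd huv (not_lt.2 (hQ' u hu v hv).1.le)
      · exact hQp u hu v hv huv (lt_of_le_of_lt
          (Finset.card_le_card (Finset.filter_subset_filter _ sQ)) hlt)
    · rw [Finset.card_union_of_disjoint dPCQ, Finset.card_union_of_disjoint dPC, hCc]
      have : 2 ^ (k + 1 + 1) = 2 * 2 ^ (k + 1) := by ring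
      omega

/-- `r_2(K_s, P_n^t) < (2s)^{t(t+1) log n}`: every red/blue coloring (`true` = red)
of the pairs of `{1, ..., N}` with `N ≥ (2s)^{t(t+1) log₂ n}` contains a red clique
on `s` vertices or a blue ordered copy of `P_n^t`. -/
theorem clique_vs_power_path_large_s (s t n N : ℕ) (hs : 1 ≤ s) (ht : 1 ≤ t)
    (hn : 1 ≤ n)
    (hN : (2 * s : ℝ) ^ ((t * (t + 1) : ℝ) * Real.logb 2 n) ≤ N)
    (χ : ℕ → ℕ → Bool) :
    (∃ S : Finset ℕ, S ⊆ Finset.Icc 1 N ∧ S.card = s ∧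
      ∀ u ∈ S, ∀ v ∈ S, u < v → χ u v = true) ∨
    (∃ v : ℕ → ℕ, (∀ i < n, v i ∈ Finset.Icc 1 N) ∧
      (∀ i j, i < j → j < n → v i < v j) ∧
      ∀ i j, i < j → j < n → j - i ≤ t → χ (v i) (v j) = false) := by
  have hk : ((2 * s) ^ (t * (t + 1) * Nat.log 2 n) : ℕ) ≤ N := by
    have h1 : ((2 * s : ℝ)) ^ ((t * (t + 1) * Nat.log 2 n : ℕ) : ℝ) ≤
        (2 * s : ℝ) ^ ((t * (t + 1) : ℝ) * Real.logb 2 n) := by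
      apply Real.rpow_le_rpow_of_exponent_le
      · have : (1 : ℝ) ≤ s := by exact_mod_cast hs
        linarith
      · push_cast
        apply mul_le_mul_of_nonneg_left _ (by positivity)
        exact_mod_cast Real.natLog_le_logb n 2
    have h2 := h1.trans hN
    rw [Real.rpow_natCast] at h2
    exact_mod_cast h2
  have hN1 : 1 ≤ N := le_trans (Nat.one_le_pow _ _ (by omega)) hk
  by_cases hs1 : s = 1
  · left
    refine ⟨{1}, by simpa using hN1, by simp [hs1], ?_⟩
    intro u hu v hv huv
    simp only [Finset.mem_singleton] at hu hv
    omega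
  by_cases hR : NoRed χ s (Finset.Icc 1 N)
  · right
    obtain ⟨r, rfl⟩ : ∃ r, t = r + 1 := ⟨t - 1, by omega⟩
    obtain ⟨P, hP, hPp, hPc⟩ := main_ind χ s r (by omega) (Nat.log 2 n) _ hR (by simpa using hk)
    have hlog : n < 2 ^ (Nat.log 2 n + 1) := Nat.lt_pow_succ_log_self (by norm_num) n
    have hnP : n ≤ P.card := by omega
    let e := P.orderEmbOfFin rfl
    have he : ∀ i, e i ∈ P := fun i => Finset.orderEmbOfFin_mem _ _ _
    have hv : ∀ i, (h : i < n) →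
        (fun i => if h : i < P.card then e ⟨i, h⟩ else 0) i = e ⟨i, h.trans_le hnP⟩ := by
      intro i h
      simp [h.trans_le hnP]
    refine ⟨fun i => if h : i < P.card then e ⟨i, h⟩ else 0, ?_, ?_, ?_⟩
    · intro i hi
      rw [hv i hi]; exact hP (he _)
    · intro i j hij hj
      rw [hv i (hij.trans hj), hv j hj]
      exact e.strictMono hij
    · intro i j hij hj hd
      rw [hv i (hij.trans hj), hv j hj]
      refine hPp _ (he _) _ (he _) (e.strictMono hij) ?_
      have hsub : P.filter (fun w => e ⟨i, (hij.trans hj).trans_le hnP⟩ < w ∧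
          w < e ⟨j, hj.trans_le hnP⟩) ⊆ (Finset.Ioo (⟨i, (hij.trans hj).trans_le hnP⟩ : Fin P.card)
            ⟨j, hj.trans_le hnP⟩).image e := by
        intro w hw
        obtain ⟨hwP, h1, h2⟩ := Finset.mem_filter.1 hw
        have : w ∈ Set.range e := by
          rw [Finset.range_orderEmbOfFin]; exact hwP
        obtain ⟨k, rfl⟩ := this
        exact Finset.mem_image_of_mem _ (Finset.mem_Ioo.2 ⟨e.lt_iff_lt.1 h1, e.lt_iff_lt.1 h2⟩)
      have h3 := (Finset.card_le_card hsub).trans Finset.card_image_le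
      rw [Fin.card_Ioo] at h3
      simp only at h3
      omega
  · left
    unfold NoRed at hR
    push Not at hR
    obtain ⟨S, h1, h2, h3⟩ := hR
    exact ⟨S, h1, h2, h3⟩
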